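/- arXiv:0811.4691 — 5 statements merged into one kernel-verified Lean document; each statement's English description precedes it below -/
import Mathlib

section
/- Let A ⊆ R be an extension of integral domains where A is a Noetherian ring. Then the following statements are equivalent: (1) R is an A-subalgebra of an affine domain over A, i.e., there exists an integral domain T that is a finitely generated A-algebra together with an injective A-algebra homomorphism R → T; (2) there exists a nonzero element r of R such that the localization R[r⁻¹] of R away from r is an affine domain over A; (3) there exists a subring B of R containing the image of A such that B is an affine domain over A, and a nonzero element b of B, such that R is contained in the localization B[b⁻¹] of B away from b (the containments B ⊆ R ⊆ B[b⁻¹] taking place inside the fraction field of R). -/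
universe u v

/-- The `A`-algebra structure on the localization of `R` away from `r`, obtained by
composing `A → R → R[r⁻¹]`. -/
noncomputable def awayAlgebra {A R : Type*} [CommRing A] [CommRing R] [Algebra A R] (r : R) :
    Algebra A (Localization.Away r) :=
  ((algebraMap R (Localization.Away r)).comp (algebraMap A R)).toAlgebra

theorem aux_alg {A : Type u} {R : Type v} {T : Type (max u v)} [CommRing A] [CommRing R] [IsDomain R] [CommRing T] [IsDomain T]
    [Algebra A R] [Algebra R T] [Algebra A T] [IsScalarTower A R T] [Algebra.FiniteType A T]
    (hinj : Function.Injective (algebraMap R T)) :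
    ∃ (L : Type (max u v)) (_ : Field L) (_ : Algebra A L) (_ : Algebra R L) (_ : IsScalarTower A R L),
      Function.Injective (algebraMap R L) ∧ Algebra.IsAlgebraic R L ∧
      ∃ s : Finset L, ∀ x : R, algebraMap R L x ∈ Algebra.adjoin A (s : Set L) := by
  have hRT : Algebra.FiniteType R T := Algebra.FiniteType.of_restrictScalars_finiteType A R T
  let K := FractionRing R
  let W := TensorProduct R K T
  have hnt : Nontrivial W := by
    have hj : Function.Injective (algebraMap R (FractionRing T)) := by
      rw [IsScalarTower.algebraMap_eq R T (FractionRing T)]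
      exact (IsFractionRing.injective T (FractionRing T)).comp hinj
    let g : K →ₐ[R] FractionRing T := IsFractionRing.liftAlgHom
      (g := Algebra.ofId R (FractionRing T)) hj
    let h : W →ₐ[R] FractionRing T := Algebra.TensorProduct.lift g
      (IsScalarTower.toAlgHom R T (FractionRing T)) (fun _ _ => Commute.all _ _)
    exact h.toRingHom.domain_nontrivial
  obtain ⟨m, hm⟩ := Ideal.exists_maximal W
  let L := W ⧸ m
  let : Field L := Ideal.Quotient.field m
  have hKL : Module.Finite K L := finite_of_finite_type_of_isJacobsonRing K L
  have tAL : IsScalarTower A R L := inferInstance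
  have hRL : Function.Injective (algebraMap R L) := by
    rw [IsScalarTower.algebraMap_eq R K L]
    exact (algebraMap K L).injective.comp (IsFractionRing.injective R K)
  have halg : Algebra.IsAlgebraic R L := by
    have : Algebra.IsAlgebraic K L := Algebra.IsAlgebraic.of_finite K L
    exact (IsFractionRing.comap_isAlgebraic_iff (A := R) (K := K) (C := L)).mpr this
  let φ : T →ₐ[R] L := (Ideal.Quotient.mkₐ R m).comp Algebra.TensorProduct.includeRight
  obtain ⟨s, hs⟩ := (Algebra.FiniteType.out : (⊤ : Subalgebra A T).FG)
  classical
  refine ⟨L, inferInstance, inferInstance, inferInstance, tAL, hRL, halg, s.image φ, fun x => ?_⟩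
  have h1 : algebraMap R L x = (φ.restrictScalars A) (algebraMap R T x) := by simp
  rw [h1, Finset.coe_image]
  have h2 := AlgHom.map_adjoin (φ.restrictScalars A) (s : Set T)
  rw [hs] at h2
  have h3 : (φ.restrictScalars A) (algebraMap R T x) ∈
    Subalgebra.map (φ.restrictScalars A) ⊤ := ⟨_, trivial, rfl⟩
  rw [h2] at h3
  exact h3

theorem aux_artin_tate {A R L : Type*} [CommRing A] [IsNoetherianRing A] [CommRing R] [IsDomain R]
    [Field L] [Algebra A R] [Algebra A L] [Algebra R L] [IsScalarTower A R L]
    (hinj : Function.Injective (algebraMap R L)) [Algebra.IsAlgebraic R L]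
    (s : Finset L) (hs : ∀ x : R, algebraMap R L x ∈ Algebra.adjoin A (s : Set L)) :
    ∃ r : R, r ≠ 0 ∧ Algebra.FiniteType A (Localization.Away r) := by
  obtain ⟨r, hr, hint⟩ := Algebra.IsAlgebraic.exists_integral_multiples R s
  refine ⟨r, hr, ?_⟩
  let S := Localization.Away r
  have hr' : algebraMap R L r ≠ 0 := by
    rwa [Ne, map_eq_zero_iff _ hinj]
  let : Algebra S L := (IsLocalization.Away.lift (S := S) r
    (g := algebraMap R L) (isUnit_iff_ne_zero.mpr hr')).toAlgebra
  have e (x : R) : algebraMap S L (algebraMap R S x) = algebraMap R L x :=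
    IsLocalization.Away.lift_eq r (isUnit_iff_ne_zero.mpr hr') x
  have t1 : IsScalarTower R S L := IsScalarTower.of_algebraMap_eq (fun x => (e x).symm)
  have t2 : IsScalarTower A S L := IsScalarTower.of_algebraMap_eq (fun x => by
    rw [IsScalarTower.algebraMap_apply A R S, e, ← IsScalarTower.algebraMap_apply])
  have hSL : Function.Injective (algebraMap S L) := by
    rw [injective_iff_map_eq_zero]
    intro z hz
    obtain ⟨n, a, ha⟩ := IsLocalization.Away.surj r z
    have h := congrArg (algebraMap S L) ha
    rw [map_mul, hz, zero_mul, e] at h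
    have : a = 0 := by rwa [eq_comm, map_eq_zero_iff _ hinj] at h
    rw [this, map_zero] at ha
    exact ((IsLocalization.Away.algebraMap_pow_isUnit r n).mul_left_eq_zero).mp ha
  have hinv : algebraMap S L (IsLocalization.Away.invSelf r) * algebraMap R L r = 1 := by
    rw [← e, ← map_mul, mul_comm, IsLocalization.Away.mul_invSelf, map_one]
  have hint' : ∀ z ∈ (s : Set L), IsIntegral S z := by
    intro z hz
    have h := ((hint z hz).tower_top (A := S)).smul (IsLocalization.Away.invSelf r : S)
    rw [Algebra.smul_def, Algebra.smul_def, ← mul_assoc, hinv, one_mul] at h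
    exact h
  let C : Subalgebra S L := Algebra.adjoin S (s : Set L)
  have hfin : (⊤ : Submodule S C).FG :=
    (Submodule.fg_top (Subalgebra.toSubmodule C)).mpr (fg_adjoin_of_finite s.finite_toSet hint')
  have hCi : Function.Injective (algebraMap S C) := by
    intro x y h
    exact hSL (congrArg Subtype.val h)
  have hle : (C.restrictScalars A) =
      Algebra.adjoin A ((s : Set L) ∪ {algebraMap S L (IsLocalization.Away.invSelf r)}) := by
    apply le_antisymm
    · intro z hz
      change z ∈ Algebra.adjoin S (s : Set L) at hz
      induction hz using Algebra.adjoin_induction with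
      | mem x hx => exact Algebra.subset_adjoin (Or.inl hx)
      | algebraMap w =>
        obtain ⟨n, a, ha⟩ := IsLocalization.Away.surj r w
        have h := congrArg (algebraMap S L) ha
        rw [map_mul, map_pow, e, e] at h
        have h2 : algebraMap S L w =
            algebraMap R L a * (algebraMap S L (IsLocalization.Away.invSelf r)) ^ n := by
          rw [← h, mul_assoc, ← mul_pow, mul_comm (algebraMap R L r), hinv, one_pow, mul_one]
        rw [h2]
        have h3 : algebraMap S L (IsLocalization.Away.invSelf r) ∈ Algebra.adjoin A
            ((s : Set L) ∪ {algebraMap S L (IsLocalization.Away.invSelf r)}) :=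
          Algebra.subset_adjoin (Or.inr rfl)
        exact mul_mem (Algebra.adjoin_mono Set.subset_union_left (hs a)) (pow_mem h3 n)
      | add x y _ _ hx hy => exact add_mem hx hy
      | mul x y _ _ hx hy => exact mul_mem hx hy
    · rw [Algebra.adjoin_le_iff]
      rintro z (hz | rfl)
      · exact Algebra.subset_adjoin (R := S) hz
      · exact C.algebraMap_mem _
  have hACfg : (C.restrictScalars A).FG := by
    rw [hle]
    classical
    exact ⟨s ∪ {algebraMap S L (IsLocalization.Away.invSelf r)}, by simp⟩
  have hAC : (⊤ : Subalgebra A C).FG := (C.restrictScalars A).fg_top.mpr hACfg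
  exact ⟨fg_of_fg_of_fg A S C hAC hfin hCi⟩

theorem aux_two_three {A R S : Type*} [CommRing A] [CommRing R] [IsDomain R]
    [Algebra A R] (r : R) (hr : r ≠ 0) [CommRing S] [Algebra R S] [Algebra A S]
    [IsScalarTower A R S] [IsLocalization.Away r S] (h : Algebra.FiniteType A S) :
    ∃ B : Subalgebra A R, Algebra.FiniteType A B ∧ ∃ b : B, b ≠ 0 ∧
          ∀ x : R, ∃ (n : ℕ) (c : B), x * (b : R) ^ n = (c : R) := by
  classical
  obtain ⟨s, hs⟩ := h.out
  choose n a ha using fun z : S => IsLocalization.Away.surj r z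
  let B : Subalgebra A R := Algebra.adjoin A ((insert r (s.image a) : Finset R) : Set R)
  have hrB : r ∈ B := Algebra.subset_adjoin (by simp)
  have key : ∀ z : S, ∃ (n : ℕ) (c : B), z * algebraMap R S r ^ n = algebraMap R S c := by
    intro z
    have hz : z ∈ Algebra.adjoin A (s : Set S) := by rw [hs]; trivial
    induction hz using Algebra.adjoin_induction with
    | mem x hx =>
      exact ⟨n x, ⟨a x, Algebra.subset_adjoin (by
        simp only [Finset.coe_insert, Finset.coe_image]
        exact Or.inr ⟨x, hx, rfl⟩)⟩, ha x⟩
    | algebraMap w =>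
      exact ⟨0, algebraMap A B w, by
        rw [pow_zero, mul_one, IsScalarTower.algebraMap_apply A R S]; rfl⟩
    | add x y _ _ hx hy =>
      obtain ⟨i, c, hc⟩ := hx
      obtain ⟨j, d, hd⟩ := hy
      refine ⟨i + j, c * ⟨r, hrB⟩ ^ j + d * ⟨r, hrB⟩ ^ i, ?_⟩
      change _ = algebraMap R S ((c : R) * r ^ j + (d : R) * r ^ i)
      rw [map_add, map_mul, map_mul, ← hc, ← hd, map_pow, map_pow]
      ring
    | mul x y _ _ hx hy =>
      obtain ⟨i, c, hc⟩ := hx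
      obtain ⟨j, d, hd⟩ := hy
      refine ⟨i + j, c * d, ?_⟩
      change _ = algebraMap R S ((c : R) * (d : R))
      rw [map_mul, ← hc, ← hd]
      ring
  refine ⟨B, ⟨B.fg_top.mpr ⟨_, rfl⟩⟩, ⟨r, hrB⟩, fun h0 => hr (congrArg Subtype.val h0), fun x => ?_⟩
  obtain ⟨k, c, hc⟩ := key (algebraMap R S x)
  refine ⟨k, c, ?_⟩
  have hi : Function.Injective (algebraMap R S) :=
    IsLocalization.injective S (powers_le_nonZeroDivisors_of_noZeroDivisors hr)
  apply hi
  rw [← hc, map_mul, map_pow]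

theorem aux_three_two {A R S : Type*} [CommRing A] [CommRing R]
    [Algebra A R] (r : R) [CommRing S] [Algebra R S] [Algebra A S]
    [IsScalarTower A R S] [IsLocalization.Away r S] (B : Subalgebra A R)
    (hB : Algebra.FiniteType A B)
    (h : ∀ x : R, ∃ (n : ℕ) (c : B), x * r ^ n = (c : R)) :
    Algebra.FiniteType A S := by
  classical
  obtain ⟨s, hs⟩ := B.fg_top.mp hB.out
  refine ⟨⟨insert (IsLocalization.Away.invSelf r) (s.image (algebraMap R S)), ?_⟩⟩
  rw [eq_top_iff]
  intro z _
  obtain ⟨n, a, ha⟩ := IsLocalization.Away.surj r z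
  obtain ⟨m, ⟨c, hcB⟩, hc⟩ := h a
  change a * r ^ m = c at hc
  have h1 : z = algebraMap R S c * (IsLocalization.Away.invSelf r : S) ^ (n + m) := by
    rw [← hc, map_mul, ← ha, map_pow, mul_assoc, mul_assoc, ← mul_assoc (_ ^ n), ← pow_add,
      ← mul_pow, IsLocalization.Away.mul_invSelf, one_pow, mul_one]
  rw [h1]
  refine mul_mem ?_ (pow_mem (Algebra.subset_adjoin (by simp)) _)
  have h2 : algebraMap R S c ∈ Subalgebra.map (IsScalarTower.toAlgHom A R S) B := ⟨c, hcB, rfl⟩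
  rw [← hs, AlgHom.map_adjoin] at h2
  refine Algebra.adjoin_mono ?_ h2
  simp

theorem awayAlgebra_finiteType_iff {A R : Type*} [CommRing A] [CommRing R] [Algebra A R] (r : R) :
    @Algebra.FiniteType A (Localization.Away r) _ _ (awayAlgebra r) ↔
      Algebra.FiniteType A (Localization.Away r) := by
  have : (awayAlgebra r : Algebra A (Localization.Away r)) =
      (inferInstance : Algebra A (Localization.Away r)) := by
    apply Algebra.algebra_ext
    intro x
    exact (IsScalarTower.algebraMap_apply A R (Localization.Away r) x).symm
  rw [this]

/-- Proposition 3.1: for an extension of domains `A ⊆ R` with `A` Noetherian, the following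
are equivalent: (1) `R` is an `A`-subalgebra of an affine domain over `A`; (2) there is a
nonzero `r ∈ R` such that `R[r⁻¹]` is an affine domain over `A`; (3) there is an affine
domain `B` over `A` with `B ⊆ R` and a nonzero `b ∈ B` such that `R ⊆ B[b⁻¹]`
(i.e. every `x ∈ R` satisfies `x·bⁿ ∈ B` for some `n`). -/
theorem subalgebra_of_affine_domain_tfae
    {A : Type u} {R : Type v} [CommRing A] [IsDomain A] [IsNoetherianRing A]
    [CommRing R] [IsDomain R] [Algebra A R]
    (hAR : Function.Injective (algebraMap A R)) :
    List.TFAE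
      [ -- (1) `R` embeds into an affine domain over `A`
        ∃ (T : Type (max u v)) (_ : CommRing T) (_ : IsDomain T) (_ : Algebra A T),
          Algebra.FiniteType A T ∧ ∃ f : R →ₐ[A] T, Function.Injective f,
        -- (2) some localization `R[r⁻¹]` at a nonzero `r` is an affine domain over `A`
        ∃ r : R, r ≠ 0 ∧ IsDomain (Localization.Away r) ∧
          @Algebra.FiniteType A (Localization.Away r) _ _ (awayAlgebra r),
        -- (3) there are `B ⊆ R` affine over `A` and `0 ≠ b ∈ B` with `R ⊆ B[b⁻¹]`
        ∃ B : Subalgebra A R, Algebra.FiniteType A B ∧ ∃ b : B, b ≠ 0 ∧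
          ∀ x : R, ∃ (n : ℕ) (c : B), x * (b : R) ^ n = (c : R) ] := by
  tfae_have 1 → 2 := by
    rintro ⟨T, _, _, _, hT, f, hf⟩
    let : Algebra R T := f.toRingHom.toAlgebra
    have : IsScalarTower A R T := IsScalarTower.of_algebraMap_eq (fun x => (f.commutes x).symm)
    obtain ⟨L, _, _, _, _, hi, halg, s, hs⟩ := aux_alg (A := A) (R := R) (T := T) hf
    obtain ⟨r, hr, h⟩ := aux_artin_tate (A := A) hi s hs
    exact ⟨r, hr, IsLocalization.Away.isDomain (S := Localization.Away r) hr,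
      (awayAlgebra_finiteType_iff r).mpr h⟩
  tfae_have 2 → 3 := by
    rintro ⟨r, hr, _, h⟩
    exact aux_two_three r hr ((awayAlgebra_finiteType_iff r).mp h)
  tfae_have 3 → 2 := by
    rintro ⟨B, hB, b, hb, h⟩
    have hb' : (b : R) ≠ 0 := fun h0 => hb (Subtype.ext h0)
    exact ⟨b, hb', IsLocalization.Away.isDomain (S := Localization.Away (b : R)) hb',
      (awayAlgebra_finiteType_iff _).mpr (aux_three_two (b : R) B hB h)⟩
  tfae_have 2 → 1 := by
    rintro ⟨r, hr, hd, h⟩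
    have h' := (awayAlgebra_finiteType_iff r).mp h
    let e : Localization.Away r ≃ₐ[A] ULift.{max u v} (Localization.Away r) := ULift.algEquiv.symm
    refine ⟨ULift.{max u v} (Localization.Away r), inferInstance,
      e.symm.toMulEquiv.isDomain _, inferInstance, h'.equiv e,
      e.toAlgHom.comp (IsScalarTower.toAlgHom A R (Localization.Away r)), ?_⟩
    exact e.injective.comp (IsLocalization.injective (Localization.Away r)
      (powers_le_nonZeroDivisors_of_noZeroDivisors hr))
  tfae_finish
end

section
/- Let A be a Noetherian domain and R a domain containing A such that for some nonzero r ∈ R the localization R[r⁻¹] of R away from r is an affine domain over A. Then there exists a subring B of R containing A such that B is an affine domain over A and a nonzero element b ∈ B such that B ⊆ R ⊆ B[b⁻¹], where B[b⁻¹] is the localization of B away from b viewed inside the fraction field of R. -/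
/-- Let `A` be a Noetherian domain and `R` a domain containing `A` such that for some
nonzero `r ∈ R` the localization `R[r⁻¹]` is an affine domain over `A`.  Then there is a
subring `B` of `R` containing `A` which is an affine domain over `A`, and a nonzero
`b ∈ B`, such that `B ⊆ R ⊆ B[b⁻¹]` (the latter containment expressed by: every `x ∈ R`
satisfies `x·bⁿ ∈ B` for some `n ≥ 0`). -/
theorem exists_affine_subring_of_away_finiteType
    {A R : Type*} [CommRing A] [IsDomain A] [IsNoetherianRing A]
    [CommRing R] [IsDomain R] [Algebra A R]
    (hAR : Function.Injective (algebraMap A R))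
    (r : R) (hr : r ≠ 0)
    (hfin : @Algebra.FiniteType A (Localization.Away r) _ _ (awayAlgebra r)) :
    ∃ B : Subalgebra A R, Algebra.FiniteType A B ∧ ∃ b : B, b ≠ 0 ∧
      ∀ x : R, ∃ (n : ℕ) (c : B), x * (b : R) ^ n = (c : R) := by
  have hinst : awayAlgebra r = (inferInstance : Algebra A (Localization.Away r)) := by
    apply Algebra.algebra_ext
    intro a
    exact (IsScalarTower.algebraMap_apply A R (Localization.Away r) a).symm
  rw [hinst] at hfin
  obtain ⟨S, hS⟩ := hfin.out
  have hinj : Function.Injective (algebraMap R (Localization.Away r)) :=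
    IsLocalization.injective (Localization.Away r)
      (powers_le_nonZeroDivisors_of_noZeroDivisors hr)
  have hsurj : ∀ y : Localization.Away r, ∃ (n : ℕ) (a : R),
      y * algebraMap R (Localization.Away r) r ^ n = algebraMap R (Localization.Away r) a := by
    intro y
    obtain ⟨n, a, h⟩ := IsLocalization.Away.surj r y
    exact ⟨n, a, h⟩
  choose N a hNa using hsurj
  classical
  let T : Finset R := insert r (S.image a)
  let B : Subalgebra A R := Algebra.adjoin A (T : Set R)
  have hrB : r ∈ B := Algebra.subset_adjoin (by simp [T])
  refine ⟨B, (Subalgebra.fg_iff_finiteType _).1 ⟨T, rfl⟩, ⟨r, hrB⟩, ?_, ?_⟩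
  · intro h
    exact hr (congrArg Subtype.val h)
  · have key : ∀ y : Localization.Away r, ∃ (n : ℕ) (c : R), c ∈ B ∧
        y * algebraMap R (Localization.Away r) r ^ n = algebraMap R (Localization.Away r) c := by
      intro y
      have hy : y ∈ Algebra.adjoin A (S : Set (Localization.Away r)) := by rw [hS]; trivial
      induction hy using Algebra.adjoin_induction with
      | mem y hy =>
        refine ⟨N y, a y, Algebra.subset_adjoin ?_, hNa y⟩
        simp only [T, Finset.coe_insert, Finset.coe_image]
        exact Or.inr ⟨y, hy, rfl⟩
      | algebraMap t =>
        refine ⟨0, algebraMap A R t, B.algebraMap_mem t, ?_⟩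
        rw [pow_zero, mul_one, ← IsScalarTower.algebraMap_apply]
      | add x y _ _ hx hy =>
        obtain ⟨n, c, hc, h1⟩ := hx
        obtain ⟨m, d, hd, h2⟩ := hy
        refine ⟨n + m, c * r ^ m + d * r ^ n,
          B.add_mem (B.mul_mem hc (B.pow_mem hrB _)) (B.mul_mem hd (B.pow_mem hrB _)), ?_⟩
        simp only [map_add, map_mul, map_pow]
        rw [← h1, ← h2]
        ring
      | mul x y _ _ hx hy =>
        obtain ⟨n, c, hc, h1⟩ := hx
        obtain ⟨m, d, hd, h2⟩ := hy
        refine ⟨n + m, c * d, B.mul_mem hc hd, ?_⟩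
        rw [map_mul, ← h1, ← h2]
        ring
    intro x
    obtain ⟨n, c, hc, h⟩ := key (algebraMap R (Localization.Away r) x)
    refine ⟨n, ⟨c, hc⟩, hinj ?_⟩
    simpa using h
end

section
/- Let A ⊆ R be an extension of integral domains where A is Noetherian and R is an A-subalgebra of an affine domain over A. Then there exists an affine domain T over A with R ⊆ T such that for every prime ideal p of R with pT ≠ T, the localization R_p is a Noetherian ring. -/
universe u v

open scoped TensorProduct

lemma aux_field {B : Type*} {T : Type*} [CommRing B] [IsDomain B] [CommRing T] [IsDomain T]
    [Algebra B T] [Algebra.FiniteType B T] (hBT : Function.Injective (algebraMap B T)) :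
    ∃ (M : Ideal (FractionRing B ⊗[B] T)), M.IsMaximal ∧
      Algebra.IsAlgebraic (FractionRing B) ((FractionRing B ⊗[B] T) ⧸ M) := by
  have : FaithfulSMul B T := (faithfulSMul_iff_algebraMap_injective B T).mpr hBT
  have : FaithfulSMul B (FractionRing T) := by
    rw [faithfulSMul_iff_algebraMap_injective, IsScalarTower.algebraMap_eq B T (FractionRing T)]
    exact (IsFractionRing.injective T (FractionRing T)).comp hBT
  let : Algebra (FractionRing B) (FractionRing T) := FractionRing.liftAlgebra B (FractionRing T)
  have : Nontrivial (FractionRing B ⊗[B] T) :=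
    (Algebra.TensorProduct.productMap (IsScalarTower.toAlgHom B (FractionRing B) (FractionRing T))
      (IsScalarTower.toAlgHom B T (FractionRing T))).toRingHom.domain_nontrivial
  obtain ⟨M, hM⟩ := Ideal.exists_maximal (FractionRing B ⊗[B] T)
  refine ⟨M, hM, ?_⟩
  let := Ideal.Quotient.field M
  have := finite_of_finite_type_of_isJacobsonRing (FractionRing B) ((FractionRing B ⊗[B] T) ⧸ M)
  exact Algebra.IsAlgebraic.of_finite _ _

lemma aux_field' {B : Type u} {T : Type v} [CommRing B] [IsDomain B] [CommRing T] [IsDomain T]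
    [Algebra B T] [Algebra.FiniteType B T] (hBT : Function.Injective (algebraMap B T)) :
    ∃ (L : Type (max u v)) (_ : Field L) (_ : Algebra B L) (_ : T →ₐ[B] L),
      Function.Injective (algebraMap B L) ∧ Algebra.IsAlgebraic B L := by
  obtain ⟨M, hM, halg⟩ := aux_field hBT
  let := Ideal.Quotient.field M
  refine ⟨(FractionRing B ⊗[B] T) ⧸ M, inferInstance, inferInstance,
    ((Ideal.Quotient.mkₐ B M).comp Algebra.TensorProduct.includeRight), ?_, ?_⟩
  · rw [IsScalarTower.algebraMap_eq B (FractionRing B)]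
    exact (algebraMap (FractionRing B) ((FractionRing B ⊗[B] T) ⧸ M)).injective.comp
      (IsFractionRing.injective B (FractionRing B))
  · exact (IsFractionRing.comap_isAlgebraic_iff (A := B) (K := FractionRing B)).mpr halg

lemma aux_main {B R T : Type*} [CommRing B] [IsDomain B] [IsNoetherianRing B]
    [CommRing R] [IsDomain R] [CommRing T] [IsDomain T]
    [Algebra B R] [Algebra B T] [Algebra.FiniteType B T] [Algebra.IsAlgebraic B R]
    (f : R →ₐ[B] T) (hf : Function.Injective f) (hBR : Function.Injective (algebraMap B R)) :
    ∃ b : B, b ≠ 0 ∧ ((algebraMap R (Localization.Away (algebraMap B R b))).comp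
      (algebraMap B R)).FiniteType := by
  have hBT : Function.Injective (algebraMap B T) := by
    rw [← f.comp_algebraMap]; exact hf.comp hBR
  obtain ⟨L, _, _, g, hBL, hLalg⟩ := aux_field' hBT
  -- generators
  obtain ⟨s, hs⟩ := ‹Algebra.FiniteType B T›.out
  have hint : ∀ t : L, ∃ b : B, b ≠ 0 ∧ IsIntegral B (b • t) := fun t =>
    (Algebra.IsAlgebraic.isAlgebraic (R := B) t).exists_integral_multiple
  choose d hd0 hd using hint
  set b : B := ∏ t ∈ s, d (g t) with hb
  have hb0 : b ≠ 0 := Finset.prod_ne_zero_iff.mpr fun t _ => hd0 _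
  refine ⟨b, hb0, ?_⟩
  set φ : R →ₐ[B] L := g.comp f
  have hφ : Function.Injective φ := by
    rw [injective_iff_map_eq_zero]
    intro x hx
    by_contra hx0
    have := Ideal.comap_ne_bot_of_algebraic_mem (R := B) (I := RingHom.ker φ) hx0 hx
      (Algebra.IsAlgebraic.isAlgebraic x)
    apply this
    rw [eq_bot_iff]
    intro c hc
    have hc' : φ (algebraMap B R c) = 0 := hc
    rw [φ.commutes] at hc'
    exact hBL (hc'.trans (map_zero _).symm)
  set R' := Localization.Away (algebraMap B R b)
  set B' := Localization.Away b
  have hbL : IsUnit (algebraMap B L b) :=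
    isUnit_iff_ne_zero.mpr fun h => hb0 (hBL (h.trans (map_zero _).symm))
  have hbL' : IsUnit ((φ : R →+* L) (algebraMap B R b)) := by
    have : φ (algebraMap B R b) = algebraMap B L b := φ.commutes b
    exact this.symm ▸ hbL
  let : Algebra B' L := (IsLocalization.Away.lift b hbL : B' →+* L).toAlgebra
  have tower1 : IsScalarTower B B' L := .of_algebraMap_eq fun x =>
    (IsLocalization.Away.lift_eq b hbL x).symm
  have hbR' : IsUnit (algebraMap B R' b) := by
    rw [IsScalarTower.algebraMap_apply B R R']
    exact IsLocalization.Away.algebraMap_isUnit _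
  let : Algebra B' R' := (IsLocalization.Away.lift b hbR' : B' →+* R').toAlgebra
  have tower2 : IsScalarTower B B' R' := .of_algebraMap_eq fun x =>
    (IsLocalization.Away.lift_eq b hbR' x).symm
  let ψ0 : R' →+* L := IsLocalization.Away.lift (algebraMap B R b) hbL'
  have hψ0 : ∀ r : R, ψ0 (algebraMap R R' r) = φ r := fun r =>
    IsLocalization.Away.lift_eq _ hbL' r
  let ψ : R' →ₐ[B'] L :=
    { ψ0 with
      commutes' := by
        have : ψ0.comp (algebraMap B' R') = algebraMap B' L := by
          apply IsLocalization.ringHom_ext (Submonoid.powers b)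
          ext x
          simp only [RingHom.comp_apply]
          rw [← IsScalarTower.algebraMap_apply B B' R', ← IsScalarTower.algebraMap_apply B B' L,
            IsScalarTower.algebraMap_apply B R R', hψ0, φ.commutes]
        exact fun x => congrArg (fun h : B' →+* L => h x) this }
  have hψr : ∀ r : R, ψ (algebraMap R R' r) = φ r := hψ0
  have hψ : Function.Injective ψ := by
    rw [injective_iff_map_eq_zero]
    intro x hx
    obtain ⟨⟨r, m⟩, hm⟩ := IsLocalization.surj (Submonoid.powers (algebraMap B R b)) x
    have h1 : ψ (algebraMap R R' r) = 0 := by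
      rw [← hm, map_mul, hx, zero_mul]
    rw [hψr] at h1
    have h2 : r = 0 := hφ (by simpa using h1)
    rw [h2, map_zero] at hm
    exact (IsLocalization.map_units R' m).mul_left_eq_zero.mp hm
  let N : Subalgebra B' L := Algebra.adjoin B' (g '' s)
  have hNfg : N.toSubmodule.FG := by
    apply fg_adjoin_of_finite (s.finite_toSet.image g)
    rintro _ ⟨t, ht, rfl⟩
    have hu : IsUnit (algebraMap B B' (d (g t))) := by
      refine isUnit_of_dvd_unit ((algebraMap B B').map_dvd (Finset.dvd_prod_of_mem (fun t => d (g t)) ht)) ?_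
      exact IsLocalization.Away.algebraMap_isUnit b
    have h1 : IsIntegral B' (d (g t) • g t) := (hd (g t)).tower_top
    obtain ⟨w, hw⟩ := hu
    have h2 : g t = (↑w⁻¹ : B') • (d (g t) • g t) := by
      rw [← IsScalarTower.algebraMap_smul B' (d (g t)) (g t), ← hw, smul_smul, Units.inv_mul,
        one_smul]
    rw [h2]
    exact h1.smul _
  have hgN : ∀ t : T, g t ∈ N := by
    intro t
    have : t ∈ Algebra.adjoin B (s : Set T) := hs ▸ Algebra.mem_top
    have h3 : Algebra.adjoin B (s : Set T) ≤ (N.restrictScalars B).comap g :=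
      Algebra.adjoin_le fun x hx => Algebra.subset_adjoin ⟨x, hx, rfl⟩
    exact h3 this
  have hψN : ∀ x, ψ x ∈ N := by
    intro x
    obtain ⟨⟨r, m, n, rfl⟩, hm⟩ := IsLocalization.surj (Submonoid.powers (algebraMap B R b)) x
    have hu : IsUnit (algebraMap B B' (b ^ n)) := by
      rw [map_pow]; exact (IsLocalization.Away.algebraMap_isUnit b).pow n
    obtain ⟨w, hw⟩ := hu
    have h4 : (w : B') • x = algebraMap R R' r := by
      rw [← hm, hw, Algebra.smul_def, ← IsScalarTower.algebraMap_apply, mul_comm,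
        IsScalarTower.algebraMap_apply B R R', map_pow]
    have h5 : x = (↑w⁻¹ : B') • algebraMap R R' r := by
      rw [← h4, smul_smul, Units.inv_mul, one_smul]
    rw [h5, map_smul, hψr]
    exact N.smul_mem (hgN _) _
  have : IsNoetherianRing B' := IsLocalization.isNoetherianRing (Submonoid.powers b) B' ‹_›
  have : Module.Finite B' N := Module.Finite.iff_fg.mpr hNfg
  have : IsNoetherian B' N := isNoetherian_of_isNoetherianRing_of_finite B' N
  have : Module.Finite B' R' :=
    Module.Finite.of_injective (ψ.codRestrict N hψN).toLinearMap
      fun x y h => hψ (congrArg Subtype.val h)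
  have : Algebra.FiniteType B B' := IsLocalization.finiteType_of_monoid_fg (Submonoid.powers b) B'
  have : Algebra.FiniteType B R' := Algebra.FiniteType.trans (S := B') inferInstance inferInstance
  rw [← IsScalarTower.algebraMap_eq B R R']
  exact RingHom.finiteType_algebraMap.mpr this

/-- Corollary 3.2: Let `A ⊆ R` be an extension of domains where `A` is Noetherian and `R`
is an `A`-subalgebra of an affine domain over `A`.  Then there exists an affine domain `T`
over `A` with `R ⊆ T` such that for every prime ideal `p` of `R` with `pT ≠ T`, the
localization `R_p` is Noetherian. -/
theorem exists_affine_overring_with_noetherian_localizations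
    {A : Type u} {R : Type v} [CommRing A] [IsDomain A] [IsNoetherianRing A]
    [CommRing R] [IsDomain R] [Algebra A R]
    (hAR : Function.Injective (algebraMap A R))
    (hsub : ∃ (T : Type (max u v)) (_ : CommRing T) (_ : IsDomain T) (_ : Algebra A T),
      Algebra.FiniteType A T ∧ ∃ f : R →ₐ[A] T, Function.Injective f) :
    ∃ (T : Type (max u v)) (_ : CommRing T) (_ : IsDomain T) (_ : Algebra A T),
      Algebra.FiniteType A T ∧ ∃ ι : R →ₐ[A] T, Function.Injective ι ∧
        ∀ (p : Ideal R) (hp : p.IsPrime),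
          Ideal.map (ι : R →+* T) p ≠ ⊤ → IsNoetherianRing (Localization.AtPrime p) := by
  obtain ⟨T, _, _, _, hT, f, hf⟩ := hsub
  have : FaithfulSMul A R := (faithfulSMul_iff_algebraMap_injective A R).mpr hAR
  obtain ⟨s, hs⟩ := exists_isTranscendenceBasis A R
  have hsfin : s.Finite := by
    have h1 := (hs.1.map' (f := f) hf).lift_cardinalMk_le_trdeg
    have h2 : Algebra.trdeg A T < Cardinal.aleph0 := trdeg_lt_aleph0_of_finiteType
    have h3 := h1.trans_lt (Cardinal.lift_lt_aleph0.mpr h2)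
    rw [Cardinal.lift_lt_aleph0] at h3
    exact Cardinal.lt_aleph0_iff_set_finite.mp h3
  have halg := hs.isAlgebraic
  rw [Subtype.range_coe] at halg
  let B : Subalgebra A R := Algebra.adjoin A s
  have hBft : Algebra.FiniteType A B :=
    B.fg_iff_finiteType.mp (Subalgebra.fg_def.mpr ⟨s, hsfin, rfl⟩)
  have hBn : IsNoetherianRing B := Algebra.FiniteType.isNoetherianRing A B
  let : Algebra B T := ((f : R →+* T).comp (algebraMap B R)).toAlgebra
  have : IsScalarTower A B T := .of_algebraMap_eq fun x => (f.commutes x).symm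
  have : Algebra.FiniteType B T := Algebra.FiniteType.of_restrictScalars_finiteType A B T
  have : Algebra.IsAlgebraic B R := halg
  let f' : R →ₐ[B] T := { (f : R →+* T) with commutes' := fun x => rfl }
  obtain ⟨b, hb0, hfin⟩ := aux_main f' hf (Subtype.val_injective)
  set c : R := algebraMap B R b
  have hc0 : c ≠ 0 := fun h => hb0 (Subtype.val_injective h)
  have hle : Submonoid.powers c ≤ nonZeroDivisors R := powers_le_nonZeroDivisors_of_noZeroDivisors hc0
  let R' := Localization.Away c
  have hR'd : IsDomain R' := IsLocalization.isDomain_localization hle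
  have hR'ft : Algebra.FiniteType A R' :=
    RingHom.finiteType_algebraMap.mp
      (hfin.comp (RingHom.finiteType_algebraMap.mpr hBft : (algebraMap A B).FiniteType))
  have hR'n : IsNoetherianRing R' := Algebra.FiniteType.isNoetherianRing A R'
  let e : ULift.{u} R' ≃ₐ[A] R' := ULift.algEquiv
  let ι : R →ₐ[A] ULift.{u} R' := e.symm.toAlgHom.comp (IsScalarTower.toAlgHom A R R')
  refine ⟨ULift.{u} R', inferInstance, e.toMulEquiv.isDomain R', inferInstance,
    hR'ft.equiv e.symm, ι, ?_, ?_⟩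
  · exact e.symm.injective.comp (IsLocalization.injective R' hle)
  · intro p hp hne
    have hcp : c ∉ p := by
      intro hcp
      apply hne
      refine Ideal.eq_top_of_isUnit_mem _ (Ideal.mem_map_of_mem _ hcp) ?_
      exact (IsLocalization.Away.algebraMap_isUnit (S := R') c).map e.symm
    have hle' : Submonoid.powers c ≤ p.primeCompl := Submonoid.powers_le.mpr hcp
    let := IsLocalization.localizationAlgebraOfSubmonoidLe R' (Localization.AtPrime p)
      (Submonoid.powers c) p.primeCompl hle'
    have := IsLocalization.localization_isScalarTower_of_submonoid_le R' (Localization.AtPrime p)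
      (Submonoid.powers c) p.primeCompl hle'
    have := IsLocalization.isLocalization_of_submonoid_le R' (Localization.AtPrime p)
      (Submonoid.powers c) p.primeCompl hle'
    exact IsLocalization.isNoetherianRing (p.primeCompl.map (algebraMap R R')) _ hR'n
end

section
/- Let k be a field, T an affine domain over k, and R a k-subalgebra of T. Then for every maximal ideal M of R such that MT ≠ T, the height of M equals the Krull dimension of R. -/
open Polynomial

lemma aux_min {R : Type*} [CommRing R] {I p : Ideal R} (hp : p ∈ I.minimalPrimes) {x : R}
    (hx : x ∈ p) : ∃ s ∉ p, ∃ N : ℕ, x ^ N * s ∈ I := by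
  obtain ⟨⟨hp₁, hp₂⟩, hp₃⟩ := hp
  have : p.map (algebraMap R (Localization.AtPrime p)) ≤ (I.map (algebraMap _ _)).radical := by
    rw [Ideal.radical_eq_sInf, le_sInf_iff]
    rintro q ⟨hq', hq⟩
    obtain ⟨h₁, h₂⟩ := ((IsLocalization.AtPrime.orderIsoOfPrime _ p) ⟨q, hq⟩).2
    rw [Ideal.map_le_iff_le_comap] at hq' ⊢
    exact hp₃ ⟨h₁, hq'⟩ h₂
  obtain ⟨n, hn⟩ := this (Ideal.mem_map_of_mem _ hx)
  rw [IsLocalization.mem_map_algebraMap_iff (M := p.primeCompl)] at hn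
  obtain ⟨⟨a, b⟩, hn⟩ := hn
  rw [← map_pow, ← map_mul, IsLocalization.eq_iff_exists p.primeCompl] at hn
  obtain ⟨t, ht⟩ := hn
  refine ⟨t * b, (t * b).2, n, ?_⟩
  simp only at ht
  rw [show x ^ n * (t.1 * b.1) = t.1 * a by rw [← ht]; ring]
  exact Ideal.mul_mem_left _ _ a.2

lemma aux_norm {A T : Type*} [CommRing A] [IsDomain A] [IsIntegrallyClosed A] [CommRing T]
    [IsDomain T] [Algebra A T] [FaithfulSMul A T] [Algebra.IsIntegral A T]
    (π : A) (hπ : Prime π) (P : Ideal T)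
    (hP : P ∈ (Ideal.span {algebraMap A T π}).minimalPrimes) (a : A)
    (ha : algebraMap A T a ∈ P) : π ∣ a := by
  classical
  by_contra hna
  have hPp : P.IsPrime := hP.1.1
  obtain ⟨s, hs, N, hN⟩ : ∃ s ∉ P, ∃ N : ℕ, algebraMap A T a ^ N * s ∈
      Ideal.span {algebraMap A T π} := by
    exact aux_min hP ha
  obtain ⟨b, hb⟩ := Ideal.mem_span_singleton'.1 hN
  have hsi : IsIntegral A s := Algebra.IsIntegral.isIntegral s
  have hbi : IsIntegral A b := Algebra.IsIntegral.isIntegral b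
  set q := minpoly A b with hq
  have hqm : q.Monic := minpoly.monic hbi
  -- F
  set F : A[X] := (q.scaleRoots π).comp (C (a ^ N) * X) with hF
  have hFs : aeval s F = 0 := by
    rw [hF, aeval_comp]
    have h1 : aeval s (C (a ^ N) * X : A[X]) = algebraMap A T π * b := by
      rw [mul_comm (algebraMap A T π), hb]; simp
    rw [h1]
    exact scaleRoots_aeval_eq_zero (minpoly.aeval A b)
  have hdvd := minpoly.isIntegrallyClosed_dvd hsi hFs
  let B := A ⧸ Ideal.span {π}
  have : (Ideal.span {π}).IsPrime := (Ideal.span_singleton_prime hπ.ne_zero).2 hπ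
  let κ := FractionRing B
  let ψ : A →+* κ := (algebraMap B κ).comp (Ideal.Quotient.mk _)
  have hψ : ∀ x, ψ x = 0 ↔ π ∣ x := by
    intro x
    simp only [ψ, RingHom.comp_apply, FaithfulSMul.algebraMap_eq_zero_iff]
    rw [Ideal.Quotient.eq_zero_iff_mem, Ideal.mem_span_singleton]
  have hsc : (q.scaleRoots π).map ψ = X ^ q.natDegree := by
    ext i
    rw [coeff_map, coeff_scaleRoots, coeff_X_pow, map_mul, map_pow, (hψ π).2 dvd_rfl]
    split_ifs with h
    · subst h; simp [hqm]
    · rcases lt_or_gt_of_ne h with h | h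
      · rw [zero_pow (by omega)]; simp
      · rw [coeff_eq_zero_of_natDegree_lt h]; simp
  have hFm : F.map ψ = C ((ψ a ^ N) ^ q.natDegree) * X ^ q.natDegree := by
    rw [hF, map_comp, hsc]; simp [mul_pow]
  have hψa : ψ a ≠ 0 := fun h => hna ((hψ a).1 h)
  have h2 : (minpoly A s).map ψ ∣ X ^ q.natDegree := by
    have := map_dvd (mapRingHom ψ) hdvd
    simp only [coe_mapRingHom] at this
    rw [hFm] at this
    refine (IsUnit.dvd_mul_left ?_).1 this
    exact isUnit_C.2 (IsUnit.mk0 _ (pow_ne_zero _ (pow_ne_zero _ hψa)))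
  obtain ⟨i, -, hi⟩ := (dvd_prime_pow prime_X _).1 h2
  have h3 : (minpoly A s).map ψ = X ^ i :=
    eq_of_monic_of_associated ((minpoly.monic hsi).map ψ) (monic_X_pow i) hi
  have h4 : ∀ j, π ∣ (minpoly A s - X ^ i).coeff j := by
    intro j
    rw [← hψ, ← coeff_map]; simp [h3]
  have h5 : aeval s (minpoly A s - X ^ i) ∈ P := by
    rw [aeval_eq_sum_range]
    refine Ideal.sum_mem _ fun j _ => ?_
    rw [Algebra.smul_def]
    refine Ideal.mul_mem_right _ _ ?_
    exact Ideal.mem_of_dvd _ (map_dvd _ (h4 j)) (hP.1.2 (Ideal.mem_span_singleton_self _))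
  rw [map_sub, minpoly.aeval, zero_sub, map_pow, aeval_X] at h5
  exact hs (hPp.mem_of_pow_mem i (by simpa using h5))

lemma aux_mvpoly {k : Type*} [Field k] {s : ℕ} (π : MvPolynomial (Fin s) k) (hπ : Prime π) :
    ∃ i, ∀ p : MvPolynomial {j : Fin s // j ≠ i} k,
      π ∣ MvPolynomial.rename Subtype.val p → p = 0 := by
  classical
  obtain ⟨i, hi⟩ : ∃ i, MvPolynomial.degreeOf i π ≠ 0 := by
    by_contra! h
    obtain ⟨c, hc⟩ : ∃ c, π = MvPolynomial.C c := by
      refine ⟨_, MvPolynomial.vars_eq_empty_iff_eq_C.1 ?_⟩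
      ext j
      simp [MvPolynomial.mem_vars_iff_degreeOf_ne_zero, h]
    subst hc
    apply hπ.not_isUnit
    refine IsUnit.map _ (IsUnit.mk0 _ ?_)
    rintro rfl; exact hπ.ne_zero (by simp)
  refine ⟨i, fun p ⟨r, hr⟩ => ?_⟩
  by_contra hp
  have hne : MvPolynomial.rename Subtype.val p ≠ 0 := by
    intro h
    exact hp (MvPolynomial.rename_injective _ Subtype.val_injective (by simpa using h))
  have h1 : MvPolynomial.degreeOf i (MvPolynomial.rename (Subtype.val : {j : Fin s // j ≠ i} → _) p) = 0 := by
    by_contra h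
    rw [← ne_eq, ← MvPolynomial.mem_vars_iff_degreeOf_ne_zero] at h
    obtain ⟨j, -, hj⟩ := MvPolynomial.mem_vars_rename _ _ h
    exact j.2 hj
  rw [hr] at h1 hne
  rw [MvPolynomial.degreeOf_mul_eq (left_ne_zero_of_mul hne) (right_ne_zero_of_mul hne)] at h1
  omega

lemma aux_trdeg {k T : Type*} [Field k] [CommRing T] [IsDomain T] [Algebra k T]
    [Algebra.FiniteType k T] (P : Ideal T) [hPp : P.IsPrime] (hP0 : P ≠ ⊥)
    (hP1 : ∀ p : Ideal T, p.IsPrime → p ≤ P → p ≠ ⊥ → p = P) :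
    Algebra.trdeg k T ≤ Algebra.trdeg k (T ⧸ P) + 1 := by
  classical
  obtain ⟨s, g, hg, hgi⟩ := exists_integral_inj_algHom_of_fg k T
  let A := MvPolynomial (Fin s) k
  algebraize [g.toRingHom]
  have hinj : Function.Injective (algebraMap A T) := hg
  have : FaithfulSMul A T := (faithfulSMul_iff_algebraMap_injective A T).2 hinj
  have : IsScalarTower k A T := IsScalarTower.of_algebraMap_eq' g.comp_algebraMap.symm
  have hT : Algebra.trdeg k T = s := by
    have := lift_trdeg_add_eq k A T
    rw [trdeg_eq_zero (R := A) (A := T)] at this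
    simpa [A] using this.symm
  have hne : P.comap (algebraMap A T) ≠ ⊥ := by
    intro h
    exact hP0 (Ideal.eq_bot_of_comap_eq_bot h)
  obtain ⟨π, hπP, hπ⟩ := Ideal.IsPrime.exists_mem_prime_of_ne_bot (I := P.comap (algebraMap A T)) inferInstance hne
  have hPmin : P ∈ (Ideal.span {algebraMap A T π}).minimalPrimes := by
    refine ⟨⟨hPp, ?_⟩, fun p hp hpP => (hP1 p hp.1 hpP ?_).ge⟩
    · rw [Ideal.span_singleton_le_iff_mem]; exact hπP
    · rintro rfl
      have := hp.2 (Ideal.mem_span_singleton_self _)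
      rw [Ideal.mem_bot, map_eq_zero_iff _ hinj] at this
      exact hπ.ne_zero this
  obtain ⟨i, hi⟩ := aux_mvpoly π hπ
  have hind : AlgebraicIndependent k (fun j : {j : Fin s // j ≠ i} =>
      Ideal.Quotient.mkₐ k P (g (MvPolynomial.X j.1))) := by
    rw [algebraicIndependent_iff]
    intro p hp
    apply hi
    refine aux_norm π hπ P hPmin _ ?_
    rw [← Ideal.Quotient.eq_zero_iff_mem]
    rw [← hp]
    change (((Ideal.Quotient.mkₐ k P).comp g).comp (MvPolynomial.rename Subtype.val)) p = _
    congr 1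
    ext j
    simp
  have h1 := hind.lift_cardinalMk_le_trdeg
  have h2 : Fintype.card {j : Fin s // j ≠ i} + 1 = s := by
    have : 0 < s := i.pos
    simp
    omega
  rw [hT]
  rw [Cardinal.mk_fintype] at h1
  simp only [Cardinal.lift_natCast, Cardinal.lift_id'] at h1
  calc (s : Cardinal) = (Fintype.card {j : Fin s // j ≠ i} : Cardinal) + 1 := by
        exact_mod_cast h2.symm
    _ ≤ _ := by gcongr
lemma aux_ht {T : Type*} [CommRing T] [IsDomain T] (P : Ideal T) [hPp : P.IsPrime]
    (h : P.height ≤ 1) : ∀ p : Ideal T, p.IsPrime → p ≤ P → p ≠ ⊥ → p = P := by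
  intro p hp hpP hp0
  by_contra hne
  have h1 := Ideal.height_add_one_le_of_lt_of_isPrime (lt_of_le_of_ne hpP hne)
  have h2 := Ideal.height_add_one_le_of_lt_of_isPrime (bot_lt_iff_ne_bot.2 hp0)
  rw [Ideal.height_bot] at h2
  have : (1 + 1 : ℕ∞) ≤ 1 := le_trans (by gcongr; simpa using h2) (h1.trans h)
  exact absurd this (by decide)

lemma aux_avoid {T : Type*} [CommRing T] [IsDomain T] [IsNoetherianRing T] (Q : Ideal T)
    [hQ : Q.IsMaximal] (hQ1 : ¬ ∀ p : Ideal T, p.IsPrime → p ≤ Q → p ≠ ⊥ → p = Q)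
    (f : T) (hf : f ≠ 0) (hfQ : f ∈ Q) :
    ∃ g ∈ Q, ∀ w, ∃ P : Ideal T, P.IsPrime ∧ P ≤ Q ∧ g + f * w ∈ P ∧ P ≠ ⊥ ∧ f ∉ P ∧
      ∀ p : Ideal T, p.IsPrime → p ≤ P → p ≠ ⊥ → p = P := by
  have hfin := Ideal.finite_minimalPrimes_of_isNoetherianRing T (Ideal.span {f})
  obtain ⟨g, hgQ, hg⟩ : ∃ g ∈ Q, ∀ p ∈ (Ideal.span {f}).minimalPrimes, g ∉ p := by
    by_contra! hcon
    have hsub : (Q : Set T) ⊆ ⋃ p ∈ (Ideal.span {f}).minimalPrimes, (p : Set T) := by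
      intro g hg
      obtain ⟨p, hp, hgp⟩ := hcon g hg
      exact Set.mem_biUnion hp hgp
    obtain ⟨p, hp, hQp⟩ := (Ideal.subset_union_prime_finite hfin (f := id) ⊤ ⊤
      (fun p hp _ _ => hp.1.1)).1 hsub
    have hpp : p.IsPrime := hp.1.1
    have : Q = p := hQ.eq_of_le hpp.ne_top hQp
    subst this
    exact hQ1 (aux_ht _ (Ideal.height_le_one_of_isPrincipal_of_mem_minimalPrimes _ _ hp))
  refine ⟨g, hgQ, fun w => ?_⟩
  obtain ⟨P, hP, hPQ⟩ := Ideal.exists_minimalPrimes_le (I := Ideal.span {g + f * w}) (J := Q)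
    (by rw [Ideal.span_singleton_le_iff_mem]; exact Q.add_mem hgQ (Q.mul_mem_right _ hfQ))
  have hPp : P.IsPrime := hP.1.1
  have hh : g + f * w ∈ P := hP.1.2 (Ideal.mem_span_singleton_self _)
  have hPh := aux_ht P (Ideal.height_le_one_of_isPrincipal_of_mem_minimalPrimes _ _ hP)
  refine ⟨P, hPp, hPQ, hh, ?_, ?_, hPh⟩
  · rintro rfl
    obtain ⟨p, hp, -⟩ := Ideal.exists_minimalPrimes_le (I := Ideal.span {f}) (J := Q)
      (by rw [Ideal.span_singleton_le_iff_mem]; exact hfQ)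
    apply hg p hp
    rw [Ideal.mem_bot] at hh
    rw [eq_neg_of_add_eq_zero_left hh]
    exact p.neg_mem (p.mul_mem_right _ (hp.1.2 (Ideal.mem_span_singleton_self _)))
  · intro hfP
    obtain ⟨p, hp, hpP⟩ := Ideal.exists_minimalPrimes_le (I := Ideal.span {f}) (J := P)
      (by rw [Ideal.span_singleton_le_iff_mem]; exact hfP)
    have : p = P := by
      refine hPh p hp.1.1 hpP ?_
      rintro rfl
      exact hf (by simpa using hp.1.2 (Ideal.mem_span_singleton_self _))
    subst this
    exact hg p hp ((p.add_mem_iff_left (p.mul_mem_right _ hfP)).1 hh)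

lemma aux_denom (D T : Type*) [CommRing D] [IsDomain D] [CommRing T] [Algebra D T]
    [Algebra.FiniteType D T] [Algebra.IsAlgebraic D T] :
    ∃ F : D, F ≠ 0 ∧ ∀ g : T, ∃ e : ℕ, IsIntegral D (F ^ e • g) := by
  obtain ⟨S, hS⟩ := (inferInstance : Algebra.FiniteType D T).out
  obtain ⟨F, hF, h⟩ := Algebra.IsAlgebraic.exists_integral_multiples D S
  refine ⟨F, hF, fun g => ?_⟩
  have hg : g ∈ Algebra.adjoin D (S : Set T) := hS ▸ Algebra.mem_top
  induction hg using Algebra.adjoin_induction with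
  | mem x hx => exact ⟨1, by simpa using h x hx⟩
  | algebraMap r => exact ⟨0, by simpa using isIntegral_algebraMap⟩
  | add x y _ _ hx hy =>
    obtain ⟨a, ha⟩ := hx
    obtain ⟨b, hb⟩ := hy
    refine ⟨a + b, ?_⟩
    have : F ^ (a + b) • (x + y) = F ^ b • (F ^ a • x) + F ^ a • (F ^ b • y) := by
      rw [smul_add, smul_smul, smul_smul, pow_add, mul_comm (F ^ a)]
    rw [this]
    exact (ha.smul _).add (hb.smul _)
  | mul x y _ _ hx hy =>
    obtain ⟨a, ha⟩ := hx
    obtain ⟨b, hb⟩ := hy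
    refine ⟨a + b, ?_⟩
    have : F ^ (a + b) • (x * y) = (F ^ a • x) * (F ^ b • y) := by
      rw [smul_mul_smul_comm, pow_add]
    rw [this]
    exact ha.mul hb

lemma aux_deg {C : Type*} [CommRing C] [IsDomain C] (q : C[X][X]) (hq : q.Monic) (u : C[X])
    (hu : ∀ i, (q.coeff i).natDegree < u.natDegree) :
    (q.eval u).coeff (q.natDegree * u.natDegree) = u.leadingCoeff ^ q.natDegree := by
  rw [eval_eq_sum_range, Finset.sum_range_succ, coeff_add, finsetSum_coeff,
    Finset.sum_eq_zero, zero_add, hq.coeff_natDegree, one_mul]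
  · rw [coeff_pow_mul_natDegree]
  · intro i hi
    apply coeff_eq_zero_of_natDegree_lt
    have h1 : i + 1 ≤ q.natDegree := Finset.mem_range.1 hi
    calc (q.coeff i * u ^ i).natDegree ≤ (q.coeff i).natDegree + i * u.natDegree := by
          refine natDegree_mul_le.trans ?_
          gcongr
          exact natDegree_pow_le
      _ < (i + 1) * u.natDegree := by have := hu i; linarith [add_mul i 1 u.natDegree]
      _ ≤ _ := by gcongr

lemma aux_step {k T : Type*} [Field k] [CommRing T] [IsDomain T] [Algebra k T]
    [Algebra.FiniteType k T] (Q : Ideal T) [hQ : Q.IsMaximal] (r : ℕ) (hr : 0 < r)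
    (t : T) (x : Fin r → T)
    (hz : IsTranscendenceBasis k (fun o : Option (Fin r) => o.elim t x)) :
    ∃ P : Ideal T, P.IsPrime ∧ P ≤ Q ∧ P ≠ ⊥ ∧
      AlgebraicIndependent k (Ideal.Quotient.mkₐ k P ∘ x) := by
  classical
  have : IsNoetherianRing T := Algebra.FiniteType.isNoetherianRing k T
  obtain ⟨hx, ht⟩ := AlgebraicIndependent.option_iff.1 hz.1
  have htr : Algebra.trdeg k T = r + 1 := by
    have := hz.lift_cardinalMk_eq_trdeg
    simpa using this.symm
  set A := Algebra.adjoin k (Set.range x) with hA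
  let : Algebra A[X] T := (aeval (R := A) t).toRingHom.toAlgebra
  have hmap : ∀ p : A[X], algebraMap A[X] T p = aeval t p := fun _ => rfl
  have hinj : Function.Injective (algebraMap A[X] T) := transcendental_iff_injective.1 ht
  have : IsScalarTower k A[X] T := IsScalarTower.of_algebraMap_eq fun c => by
    rw [hmap, IsScalarTower.algebraMap_apply k A A[X], ← Polynomial.C_eq_algebraMap, aeval_C,
      ← IsScalarTower.algebraMap_apply]
  have : Algebra.FiniteType A[X] T := Algebra.FiniteType.of_restrictScalars_finiteType k _ _
  have halg : Algebra.IsAlgebraic A[X] T := by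
    refine ⟨fun y => ?_⟩
    have h1 := hz.isAlgebraic.isAlgebraic y
    obtain ⟨p, hp, hpy⟩ := h1
    let E := AlgEquiv.ofInjective (IsScalarTower.toAlgHom k A[X] T) hinj
    have hle : Algebra.adjoin k (Set.range fun o : Option (Fin r) => o.elim t x) ≤
        (IsScalarTower.toAlgHom k A[X] T).range := by
      rw [Algebra.adjoin_le_iff]
      rintro _ ⟨o, rfl⟩
      cases o with
      | none => exact ⟨X, by simp [hmap]⟩
      | some i => exact ⟨C ⟨x i, Algebra.subset_adjoin ⟨i, rfl⟩⟩, by simp [hmap]⟩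
    let θ := E.symm.toAlgHom.comp (Subalgebra.inclusion hle)
    have hθ : Function.Injective θ := E.symm.injective.comp (Subalgebra.inclusion_injective hle)
    refine ⟨p.map θ.toRingHom, (Polynomial.map_ne_zero_iff hθ).2 hp, ?_⟩
    rw [← hpy, aeval_def, eval₂_map, aeval_def]
    congr 1
    ext c
    change (E (E.symm (Subalgebra.inclusion hle c))).1 = _
    simp
  obtain ⟨F, hF0, hF⟩ := aux_denom A[X] T
  have hQalg : Algebra.IsAlgebraic k (T ⧸ Q) := by
    let := Ideal.Quotient.field Q
    have := finite_of_finite_type_of_isJacobsonRing k (T ⧸ Q)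
    infer_instance
  obtain ⟨c, hc0, hcQ⟩ : ∃ c : A, c ≠ 0 ∧ (c : T) ∈ Q := by
    obtain ⟨p, hp, hpy⟩ := hQalg.isAlgebraic (Ideal.Quotient.mkₐ k Q (x ⟨0, hr⟩))
    refine ⟨aeval ⟨x ⟨0, hr⟩, Algebra.subset_adjoin ⟨_, rfl⟩⟩ p, fun h => ?_, ?_⟩
    · refine hx.transcendental ⟨0, hr⟩ ⟨p, hp, ?_⟩
      have := congrArg A.val h
      rw [← aeval_algHom_apply] at this
      simpa using this
    · rw [aeval_algHom_apply] at hpy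
      rw [← Ideal.Quotient.eq_zero_iff_mem]
      rw [← A.val_apply, ← aeval_algHom_apply]
      exact hpy
  have hQ1 : ¬ ∀ p : Ideal T, p.IsPrime → p ≤ Q → p ≠ ⊥ → p = Q := by
    intro h
    have hQ0 : Q ≠ ⊥ := by
      rintro rfl
      exact hc0 (by simpa using hcQ)
    have := aux_trdeg (k := k) Q hQ0 h
    rw [htr, trdeg_eq_zero (R := k) (A := T ⧸ Q)] at this
    have : r = 0 := by simpa using this
    omega
  set l := F.leadingCoeff with hl
  have hl0 : l ≠ 0 := leadingCoeff_ne_zero.2 hF0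
  set a : A[X] := F * C l * C c with ha
  have ha0 : a ≠ 0 := mul_ne_zero (mul_ne_zero hF0 (C_ne_zero.2 hl0)) (C_ne_zero.2 hc0)
  have hfeq : algebraMap A[X] T a = algebraMap A[X] T F * l * c := by
    rw [ha, map_mul, map_mul]; simp [hmap]
  obtain ⟨g, hgQ, hg⟩ := aux_avoid Q hQ1 (algebraMap A[X] T a)
    (by rwa [ne_eq, map_eq_zero_iff _ hinj]) (by rw [hfeq]; exact Q.mul_mem_left _ hcQ)
  obtain ⟨e, q, hqm, hq⟩ := hF g
  let N := (q.support.sup fun i => (q.coeff i).natDegree) + 1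
  obtain ⟨P, hP, hPQ, hhP, hP0, hfP, hP1⟩ := hg (t ^ N)
  refine ⟨P, hP, hPQ, hP0, ?_⟩
  rw [hfeq] at hfP
  have hcP : (c : T) ∉ P := fun h => hfP (P.mul_mem_left _ h)
  have hlP : (l : T) ∉ P := fun h => hfP (P.mul_mem_right _ (P.mul_mem_left _ h))
  have hFP : algebraMap A[X] T F ∉ P := fun h => hfP (P.mul_mem_right _ (P.mul_mem_right _ h))
  set u : A[X] := - (F ^ e * a * X ^ N) with hu
  have hulc : u.leadingCoeff = - (l ^ e * (l * l * c)) := by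
    simp [hu, ha, hl]
  have hudeg : N ≤ u.natDegree := by
    rw [hu, natDegree_neg, natDegree_mul_X_pow _ (mul_ne_zero (pow_ne_zero _ hF0) ha0)]
    omega
  have hdeg : ∀ i, (q.coeff i).natDegree < u.natDegree := by
    intro i
    refine lt_of_lt_of_le ?_ hudeg
    by_cases hi : i ∈ q.support
    · exact Nat.lt_succ_of_le (Finset.le_sup (f := fun i => (q.coeff i).natDegree) hi)
    · rw [notMem_support_iff.1 hi]; simp [N]
  have hcoef := aux_deg q hqm u hdeg
  have hEP : algebraMap A[X] T (q.eval u) ∈ P := by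
    have h1 := sub_dvd_eval_sub (algebraMap A[X] T u) (F ^ e • g) (q.map (algebraMap A[X] T))
    rw [eval_map, eval_map, hq, sub_zero, eval₂_at_apply] at h1
    refine P.mem_of_dvd h1 ?_
    have : algebraMap A[X] T u - F ^ e • g =
        - (algebraMap A[X] T F ^ e) * (g + algebraMap A[X] T a * t ^ N) := by
      rw [hu, Algebra.smul_def]
      simp only [map_neg, map_mul, map_pow]
      rw [hmap X, aeval_X]; ring
    rw [this]
    exact P.mul_mem_left _ hhP
  -- the quotient
  let mk := Ideal.Quotient.mkₐ k P
  have hmk0 : ∀ y, mk y = 0 ↔ y ∈ P := fun y => Ideal.Quotient.eq_zero_iff_mem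
  let B := A.map mk
  let θ : A →ₐ[k] B := AlgHom.subalgebraMap A mk
  have hθ : ∀ y : A, algebraMap B (T ⧸ P) (θ y) = mk y := fun y => rfl
  have hθ0 : ∀ y : A, θ y = 0 ↔ (y : T) ∈ P := fun y => by
    rw [← hmk0, ← hθ, map_eq_zero_iff _ (FaithfulSMul.algebraMap_injective B (T ⧸ P))]
  have htalg : IsAlgebraic B (mk t) := by
    refine ⟨(q.eval u).map θ.toRingHom, ?_, ?_⟩
    · intro h
      have := congrArg (fun p => p.coeff (q.natDegree * u.natDegree)) h
      simp only [coeff_map, hcoef, coeff_zero] at this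
      have := (hθ0 _).1 this
      rw [hulc] at this
      have := hP.mem_of_pow_mem q.natDegree (by simpa using this)
      simp only [neg_mem_iff] at this
      rcases hP.mem_or_mem this with h | h
      · exact hlP (hP.mem_of_pow_mem e (by simpa using h))
      · rcases hP.mem_or_mem h with h | h
        · rcases hP.mem_or_mem h with h | h <;> exact hlP h
        · exact hcP h
    · rw [← hmk0, hmap] at hEP
      rw [← hEP, aeval_def, eval₂_map, aeval_def]
      rw [← AlgHom.coe_toRingHom, hom_eval₂]
      rfl
  let K := Subalgebra.algebraicClosure B (T ⧸ P)
  let δ : A[X] →+* K := eval₂RingHom ((algebraMap B K).comp θ.toRingHom) ⟨mk t, htalg⟩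
  have hδ : (algebraMap K (T ⧸ P)).comp δ = mk.toRingHom.comp (algebraMap A[X] T) := by
    refine Polynomial.ringHom_ext (fun y => ?_) ?_
    · simp [δ, hmap]; rfl
    · simp [δ, hmap]
  have hBalg : Algebra.IsAlgebraic B (T ⧸ P) := by
    refine ⟨fun y => ?_⟩
    obtain ⟨y, rfl⟩ := Ideal.Quotient.mk_surjective y
    obtain ⟨e', q', hq'm, hq'⟩ := hF y
    have hint : IsIntegral K (mk (F ^ e' • y)) := by
      refine ⟨q'.map δ, hq'm.map δ, ?_⟩
      rw [eval₂_map, hδ]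
      have := hom_eval₂ q' (algebraMap A[X] T) mk.toRingHom (F ^ e' • y)
      rw [hq', map_zero] at this
      exact this.symm
    have h1 : IsAlgebraic B (mk (F ^ e' • y)) := hint.isAlgebraic.restrictScalars B
    rw [Algebra.smul_def, map_mul, map_pow, map_pow] at h1
    have h2 : IsAlgebraic B (mk (algebraMap A[X] T F)) := by
      have := (δ F).2
      rwa [show ((δ F : K) : T ⧸ P) = mk (algebraMap A[X] T F) from RingHom.congr_fun hδ F] at this
    refine IsAlgebraic.of_mul (mem_nonZeroDivisors_of_ne_zero ?_) (h2.pow e') h1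
    exact pow_ne_zero _ (mt (hmk0 _).1 hFP)
  have hB : B = Algebra.adjoin k (Set.range (mk ∘ x)) := by
    rw [Set.range_comp, ← AlgHom.map_adjoin]
  rw [hB] at hBalg
  have htr2 := aux_trdeg (k := k) P hP0 hP1
  rw [htr] at htr2
  refine (Algebra.IsAlgebraic.isTranscendenceBasis_of_lift_le_trdeg_of_finite k (mk ∘ x) ?_).1
  have : (r : Cardinal) ≤ Algebra.trdeg k (T ⧸ P) := by
    exact (Cardinal.add_one_le_add_one_iff).1 htr2
  simpa using this

lemma aux_cons {k A B ι : Type*} [Field k] [CommRing A] [IsDomain A] [Algebra k A] [CommRing B]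
    [Algebra k B] (ψ : A →ₐ[k] B) (x : ι → A) (h : AlgebraicIndependent k (ψ ∘ x))
    (a : A) (ha0 : a ≠ 0) (ha : ψ a = 0) :
    AlgebraicIndependent k (fun o : Option ι => o.elim a x) := by
  have hx : AlgebraicIndependent k x := h.of_comp ψ
  refine AlgebraicIndependent.option_iff.2 ⟨hx, fun hal => ?_⟩
  obtain ⟨b, hb0, hab⟩ := hal.exists_nonzero_dvd (mem_nonZeroDivisors_of_ne_zero ha0)
  obtain ⟨b, hb⟩ := b
  rw [Algebra.adjoin_range_eq_range_aeval] at hb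
  obtain ⟨p, rfl⟩ := hb
  obtain ⟨c, hc⟩ := hab
  apply hb0
  have h1 : MvPolynomial.aeval (ψ ∘ x) p = 0 := by
    have h2 : ψ (MvPolynomial.aeval x p) = ψ (a * c) := congrArg ψ hc
    rw [map_mul, ha, zero_mul] at h2
    rw [← h2, ← AlgHom.comp_apply, MvPolynomial.comp_aeval]
    rfl
  have h2 : p = 0 := h.eq_zero_of_aeval_eq_zero p h1
  subst h2
  ext
  simp

lemma aux_drop {k T : Type*} [Field k] [CommRing T] [IsDomain T] [Algebra k T]
    (P : Ideal T) [hP : P.IsPrime] (hP0 : P ≠ ⊥) (n : ℕ) (hn : Algebra.trdeg k T ≤ (n + 1 : ℕ)) :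
    Algebra.trdeg k (T ⧸ P) ≤ n := by
  have hfs : FaithfulSMul k (T ⧸ P) :=
    (faithfulSMul_iff_algebraMap_injective k (T ⧸ P)).2 (algebraMap k (T ⧸ P)).injective
  obtain ⟨s, hs⟩ := exists_isTranscendenceBasis k (T ⧸ P)
  obtain ⟨a, haP, ha0⟩ := Submodule.exists_mem_ne_zero_of_ne_bot hP0
  choose f hf using (Ideal.Quotient.mk_surjective (I := P))
  have h1 := aux_cons (Ideal.Quotient.mkₐ k P) (fun i : s => f i)
    (by
      have e : (Ideal.Quotient.mkₐ k P ∘ fun i : s => f i) = Subtype.val := by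
        ext i; exact hf _
      rw [e]; exact hs.1) a ha0 (Ideal.Quotient.eq_zero_iff_mem.2 haP)
  have h2 := h1.cardinalMk_le_trdeg.trans hn
  rw [← hs.cardinalMk_eq_trdeg]
  rw [Cardinal.mk_option] at h2
  push_cast at h2
  exact (Cardinal.add_one_le_add_one_iff).1 h2

lemma aux_step' {k T : Type*} [Field k] [CommRing T] [IsDomain T] [Algebra k T]
    [Algebra.FiniteType k T] (Q : Ideal T) [hQ : Q.IsMaximal] (r : ℕ)
    (t : T) (x : Fin r → T)
    (hz : IsTranscendenceBasis k (fun o : Option (Fin r) => o.elim t x)) :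
    ∃ P : Ideal T, P.IsPrime ∧ P ≤ Q ∧ P ≠ ⊥ ∧
      AlgebraicIndependent k (Ideal.Quotient.mkₐ k P ∘ x) := by
  rcases Nat.eq_zero_or_pos r with rfl | hr
  · refine ⟨Q, hQ.isPrime, le_rfl, ?_, ?_⟩
    · rintro rfl
      have hQalg : Algebra.IsAlgebraic k (T ⧸ (⊥ : Ideal T)) := by
        let := Ideal.Quotient.field (⊥ : Ideal T)
        have := finite_of_finite_type_of_isJacobsonRing k (T ⧸ (⊥ : Ideal T))
        infer_instance
      have h1 := hz.1.transcendental none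
      have h2 := hQalg.isAlgebraic (Ideal.Quotient.mkₐ k ⊥ t)
      refine h1 ((isAlgebraic_algHom_iff (Ideal.Quotient.mkₐ k (⊥ : Ideal T)) ?_).1 h2)
      rw [injective_iff_map_eq_zero]
      intro b hb
      simpa using Ideal.Quotient.eq_zero_iff_mem.1 hb
    · rw [algebraicIndependent_empty_type_iff]
      exact FaithfulSMul.algebraMap_injective _ _
  · exact aux_step Q r hr t x hz

lemma aux_upper {k R : Type*} [Field k] [CommRing R] [Algebra k R] (l : ℕ) :
    ∀ s : LTSeries (PrimeSpectrum R), s.length = l →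
      ∃ x : Fin l → R, AlgebraicIndependent k (Ideal.Quotient.mkₐ k s.head.asIdeal ∘ x) := by
  induction l with
  | zero =>
    intro s _
    refine ⟨Fin.elim0, ?_⟩
    rw [algebraicIndependent_empty_type_iff]
    exact FaithfulSMul.algebraMap_injective _ _
  | succ l ih =>
    intro s hs
    have h0 : s.length ≠ 0 := by omega
    obtain ⟨x, hx⟩ := ih (s.tail h0) (by simp [hs])
    have hlt : s.head < (s.tail h0).head := by
      rw [RelSeries.head_tail]
      have := s.step ⟨0, by omega⟩
      have h1 : (1 : Fin (s.length + 1)) = (⟨0, by omega⟩ : Fin s.length).succ := by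
        ext
        simp [hs]
      rw [h1]
      exact this
    obtain ⟨hle, a, ha1, ha0⟩ := SetLike.lt_iff_le_and_exists.1
      (show s.head.asIdeal < (s.tail h0).head.asIdeal from hlt)
    have h1 := aux_cons (Ideal.Quotient.factorₐ k hle) (Ideal.Quotient.mkₐ k s.head.asIdeal ∘ x)
      hx (Ideal.Quotient.mkₐ k s.head.asIdeal a)
      (mt Ideal.Quotient.eq_zero_iff_mem.1 ha0)
      (Ideal.Quotient.eq_zero_iff_mem.2 ha1)
    refine ⟨Fin.cons a x, ?_⟩
    have h2 := h1.comp _ (finSuccEquiv l).injective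
    have h3 : (Ideal.Quotient.mkₐ k s.head.asIdeal ∘ (Fin.cons a x : Fin (l + 1) → R)) =
        (fun o : Option (Fin l) => o.elim ((Ideal.Quotient.mkₐ k s.head.asIdeal) a)
      ((Ideal.Quotient.mkₐ k s.head.asIdeal) ∘ x)) ∘ (finSuccEquiv l) := by
      ext i
      refine Fin.cases ?_ (fun i => ?_) i <;> simp
    rw [h3]
    exact h2

lemma aux_extend {k T : Type*} [Field k] [CommRing T] [IsDomain T] [Algebra k T] (n : ℕ)
    (hn : Algebra.trdeg k T ≤ n) (d : ℕ) (y : Fin d → T) (hy : AlgebraicIndependent k y)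
    (hb : ¬ IsTranscendenceBasis k y) :
    ∃ (r : ℕ) (t : T) (x : Fin r → T) (f : Fin d → Fin r), Function.Injective f ∧ x ∘ f = y ∧
      IsTranscendenceBasis k (fun o : Option (Fin r) => o.elim t x) := by
  obtain ⟨s, hys, hs⟩ := exists_isTranscendenceBasis_superset
    ((algebraicIndependent_subtype_range hy.injective).2 hy)
  have hsf : s.Finite := by
    rw [← Set.finite_coe_iff, ← Cardinal.lt_aleph0_iff_finite, hs.cardinalMk_eq_trdeg]
    exact hn.trans_lt (Cardinal.natCast_lt_aleph0)
  obtain ⟨t, hts, hty⟩ : ∃ t ∈ s, t ∉ Set.range y := by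
    by_contra! h
    have : Set.range y = s := hys.antisymm h
    subst this
    exact hb ((isTranscendenceBasis_subtype_range hy.injective).1 hs)
  have hfin : Finite ↥(s \ {t}) := hsf.sdiff
  obtain ⟨r, ⟨e⟩⟩ := Finite.exists_equiv_fin ↥(s \ {t})
  have hmem : ∀ i, y i ∈ s \ {t} := fun i =>
    ⟨hys ⟨i, rfl⟩, fun h => hty ⟨i, h⟩⟩
  refine ⟨r, t, fun i => (e.symm i : T), fun i => e ⟨y i, hmem i⟩, ?_, ?_, ?_⟩
  · intro i j h
    exact hy.injective (by simpa using h)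
  · ext i; simp
  · have hinj : Function.Injective (fun o : Option (Fin r) => o.elim t fun i => (e.symm i : T)) := by
      rw [Option.injective_iff]
      refine ⟨Subtype.val_injective.comp e.symm.injective, ?_⟩
      rintro ⟨i, hi⟩
      exact (e.symm i).2.2 hi
    rw [← isTranscendenceBasis_subtype_range hinj]
    have : Set.range (fun o : Option (Fin r) => o.elim t fun i => (e.symm i : T)) = s := by
      ext z
      constructor
      · rintro ⟨_ | i, rfl⟩
        · exact hts
        · exact (e.symm i).2.1
      · intro hz
        by_cases h : z = t
        · exact ⟨none, h.symm⟩
        · exact ⟨some (e ⟨z, hz, h⟩), by simp⟩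
    rwa [this]

universe u v w

lemma aux_chain {k : Type u} {R : Type v} [Field k] [CommRing R] [Algebra k R] (n : ℕ) :
    ∀ (T : Type w) [CommRing T] [IsDomain T] [Algebra k T] [Algebra.FiniteType k T]
      (_ : Algebra.trdeg k T ≤ n) (Q : Ideal T) [Q.IsMaximal] (φ : R →ₐ[k] T) (d : ℕ)
      (y : Fin d → R) (_ : AlgebraicIndependent k (φ ∘ y)),
      ∃ s : LTSeries (PrimeSpectrum R), s.length = d ∧ s.last.asIdeal = Q.comap φ ∧
        RingHom.ker φ ≤ s.head.asIdeal := by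
  induction n with
  | zero =>
    intro T _ _ _ _ hn Q _ φ d y hy
    have hd : d = 0 := by
      have := hy.lift_cardinalMk_le_trdeg
      have h0 : Algebra.trdeg k T = 0 := by simpa using hn
      rw [h0] at this
      simpa using this
    subst hd
    refine ⟨RelSeries.singleton _ ⟨Q.comap φ, inferInstance⟩, rfl, rfl, ?_⟩
    exact Ideal.comap_mono bot_le
  | succ n ih =>
    intro T _ _ _ _ hn Q hQ φ d y hy
    have key : ∀ (P : Ideal T), P.IsPrime → P ≤ Q → P ≠ ⊥ → ∀ (d : ℕ) (y : Fin d → R),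
        AlgebraicIndependent k (Ideal.Quotient.mkₐ k P ∘ (φ ∘ y)) →
        ∃ s : LTSeries (PrimeSpectrum R), s.length = d ∧ s.last.asIdeal = Q.comap φ ∧
          P.comap φ ≤ s.head.asIdeal := by
      intro P hP hPQ hP0 d y hy
      have hm : (Q.map (Ideal.Quotient.mk P)).IsMaximal := by
        refine (Ideal.map_eq_top_or_isMaximal_of_surjective _
          Ideal.Quotient.mk_surjective hQ).resolve_left fun h => hQ.ne_top ?_
        have h2 := congrArg (Ideal.comap (Ideal.Quotient.mk P)) h
        rwa [Ideal.comap_map_of_surjective' _ Ideal.Quotient.mk_surjective, Ideal.mk_ker,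
          sup_eq_left.2 hPQ, Ideal.comap_top] at h2
      obtain ⟨s, h1, h2, h3⟩ := ih (T ⧸ P) (aux_drop P hP0 n hn) (Q.map (Ideal.Quotient.mk P))
        ((Ideal.Quotient.mkₐ k P).comp φ) d y hy
      refine ⟨s, h1, ?_, ?_⟩
      · rw [h2]
        have h4 := Ideal.comap_map_of_surjective' (Ideal.Quotient.mk P)
          Ideal.Quotient.mk_surjective Q
        rw [Ideal.mk_ker, sup_eq_left.2 hPQ] at h4
        conv_rhs => rw [← h4]
        rfl
      · refine le_trans (fun z hz => ?_) h3
        exact Ideal.Quotient.eq_zero_iff_mem.2 hz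
    by_cases hb : IsTranscendenceBasis k (φ ∘ y)
    · cases d with
      | zero =>
        refine ⟨RelSeries.singleton _ ⟨Q.comap φ, inferInstance⟩, rfl, rfl, ?_⟩
        exact Ideal.comap_mono bot_le
      | succ m =>
        have hz : IsTranscendenceBasis k
            (fun o : Option (Fin m) => o.elim (φ (y 0)) (fun i => φ (y i.succ))) := by
          refine (isTranscendenceBasis_equiv' (finSuccEquiv m) ?_).1 hb
          ext i
          refine Fin.cases ?_ (fun i => ?_) i <;> simp
        obtain ⟨P, hP, hPQ, hP0, hPx⟩ := aux_step' Q m _ _ hz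
        obtain ⟨s, h1, h2, h3⟩ := key P hP hPQ hP0 m (fun i => y i.succ) hPx
        have hker : RingHom.ker φ ≤ P.comap φ := Ideal.comap_mono bot_le
        have hpr : (RingHom.ker φ).IsPrime := RingHom.ker_isPrime _
        have hlt : (⟨RingHom.ker φ, hpr⟩ : PrimeSpectrum R) < s.head := by
          refine lt_of_le_of_ne (hker.trans h3) fun heq => ?_
          have h4 : P.comap φ ≤ RingHom.ker φ := by
            rw [← heq] at h3
            exact h3
          have hind : AlgebraicIndependent k (Ideal.Quotient.mkₐ k P ∘ (φ ∘ y)) := by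
            rw [algebraicIndependent_iff]
            intro p hp
            refine hy.eq_zero_of_aeval_eq_zero p ?_
            have e1 : MvPolynomial.aeval (Ideal.Quotient.mkₐ k P ∘ (φ ∘ y)) p =
                Ideal.Quotient.mkₐ k P (φ (MvPolynomial.aeval y p)) := by
              rw [← AlgHom.comp_apply, ← AlgHom.comp_apply,
                MvPolynomial.comp_aeval]
              rfl
            have e2 : MvPolynomial.aeval (φ ∘ y) p = φ (MvPolynomial.aeval y p) := by
              rw [← AlgHom.comp_apply, MvPolynomial.comp_aeval]
              rfl
            rw [e2]
            rw [e1] at hp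
            have hp2 : φ (MvPolynomial.aeval y p) ∈ P := Ideal.Quotient.eq_zero_iff_mem.1 hp
            exact h4 hp2
          have c1 : Algebra.trdeg k T = (m + 1 : ℕ) := by
            have := hb.lift_cardinalMk_eq_trdeg
            simpa using this.symm
          have c2 := aux_drop P hP0 m c1.le
          have c3 := hind.lift_cardinalMk_le_trdeg
          have c4 : ((m + 1 : ℕ) : Cardinal.{w}) ≤ (m : ℕ) := by
            refine le_trans ?_ c2
            simpa using c3
          have c5 : m + 1 ≤ m := Nat.cast_le.1 c4
          omega
        refine ⟨s.cons ⟨RingHom.ker φ, hpr⟩ hlt, ?_, ?_, ?_⟩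
        · simp [h1]
        · rw [RelSeries.last_cons]; exact h2
        · rw [RelSeries.head_cons]
    · obtain ⟨r, t, x, f, hf, hxf, hz⟩ := aux_extend (n + 1) hn d _ hy hb
      obtain ⟨P, hP, hPQ, hP0, hPx⟩ := aux_step' Q r t x hz
      have h0 : AlgebraicIndependent k (Ideal.Quotient.mkₐ k P ∘ (φ ∘ y)) := by
        rw [← hxf]
        exact hPx.comp f hf
      obtain ⟨s, h1, h2, h3⟩ := key P hP hPQ hP0 d y h0
      exact ⟨s, h1, h2, le_trans (Ideal.comap_mono bot_le) h3⟩

/-- Let `k` be a field, `T` an affine domain over `k`, and `R` a `k`-subalgebra of `T`.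
Then for every maximal ideal `M` of `R` such that `MT ≠ T`, the height of `M` (the Krull
dimension of the localization `R_M`) equals the Krull dimension of `R`. -/
theorem height_maximal_eq_ringKrullDim_of_subalgebra_of_affine
    {k T : Type*} [Field k] [CommRing T] [IsDomain T] [Algebra k T]
    [Algebra.FiniteType k T] (R : Subalgebra k T)
    (M : Ideal R) (hM : M.IsMaximal)
    (hMT : Ideal.map (algebraMap R T) M ≠ ⊤) :
    ringKrullDim (Localization.AtPrime M) = ringKrullDim R := by
  rw [IsLocalization.AtPrime.ringKrullDim_eq_height M (Localization.AtPrime M)]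
  refine le_antisymm (Ideal.height_le_ringKrullDim_of_isPrime) ?_
  obtain ⟨Q, hQ, hMQ⟩ := Ideal.exists_le_maximal _ hMT
  have hQM : Q.comap R.val = M := by
    refine (hM.eq_of_le (Ideal.IsPrime.ne_top inferInstance) ?_).symm
    exact Ideal.map_le_iff_le_comap.1 hMQ
  obtain ⟨n, hn⟩ := Cardinal.lt_aleph0.1 (trdeg_lt_aleph0_of_finiteType (R := k) (S := T))
  refine iSup_le fun s => ?_
  obtain ⟨x, hx⟩ := aux_upper (k := k) s.length s rfl
  have hx1 : AlgebraicIndependent k x := hx.of_comp _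
  have hx2 : AlgebraicIndependent k (R.val ∘ x) := hx1.map' Subtype.val_injective
  obtain ⟨s', h1, h2, -⟩ := aux_chain n T hn.le Q R.val s.length x hx2
  have h3 := Order.length_le_height (p := s') le_rfl
  rw [← PrimeSpectrum.height_eq_orderHeight, h2, hQM, h1] at h3
  exact_mod_cast h3
end

section
/- Let R ⊆ T be an extension of integral domains such that T is integral over R and T is flat as an R-module. Then for every prime ideal P of R, the height of the extended ideal PT in T equals the height of P in R, where the height of a proper ideal is the infimum of the heights of the prime ideals containing it. -/
/-- The height of an ideal `I` of `T`: the infimum of the heights of the prime ideals of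
`T` containing `I`, the height of a prime ideal `Q` being the Krull dimension of the
localization `T_Q`. -/
noncomputable def idealHeight {T : Type*} [CommRing T] (I : Ideal T) : WithBot (WithTop ℕ) :=
  ⨅ (Q : Ideal T) (hQ : Q.IsPrime) (_ : I ≤ Q), ringKrullDim (@Localization.AtPrime T _ Q hQ)

/-- Let `R ⊆ T` be an extension of integral domains such that `T` is integral over `R` and
`T` is flat as an `R`-module.  Then for every prime ideal `P` of `R`, the height of the
extended ideal `PT` in `T` equals the height of `P` in `R` (the latter being the Krull
dimension of the localization `R_P`). -/
theorem idealHeight_map_eq_of_integral_of_flat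
    {R T : Type*} [CommRing R] [IsDomain R] [CommRing T] [IsDomain T] [Algebra R T]
    (hRT : Function.Injective (algebraMap R T))
    [Algebra.IsIntegral R T] [Module.Flat R T]
    (P : Ideal R) (hP : P.IsPrime) :
    idealHeight (P.map (algebraMap R T)) = ringKrullDim (Localization.AtPrime P) := by
  have key : ∀ (Q : Ideal T) (hQ : Q.IsPrime), ringKrullDim (@Localization.AtPrime T _ Q hQ) =
      (Order.height (⟨Q, hQ⟩ : PrimeSpectrum T) : WithBot ℕ∞) := by
    intro Q hQ
    rw [IsLocalization.AtPrime.ringKrullDim_eq_height Q,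
      ← PrimeSpectrum.height_eq_orderHeight ⟨Q, hQ⟩]
  have keyP : ringKrullDim (Localization.AtPrime P) =
      (Order.height (⟨P, hP⟩ : PrimeSpectrum R) : WithBot ℕ∞) := by
    rw [IsLocalization.AtPrime.ringKrullDim_eq_height P,
      ← PrimeSpectrum.height_eq_orderHeight ⟨P, hP⟩]
  rw [keyP]
  unfold idealHeight
  apply le_antisymm
  · obtain ⟨Q, -, hQ, hQP⟩ := Ideal.exists_ideal_over_prime_of_isIntegral P (⊥ : Ideal T)
      (by rw [← RingHom.ker_eq_comap_bot, (RingHom.injective_iff_ker_eq_bot _).mp hRT]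
          exact bot_le)
    refine iInf_le_of_le Q (iInf_le_of_le hQ (iInf_le_of_le ?_ ?_))
    · rw [Ideal.map_le_iff_le_comap, hQP]
    · rw [key]; refine WithBot.coe_le_coe.mpr ?_
      have hs : StrictMono (PrimeSpectrum.comap (algebraMap R T)) := by
        intro a b hab
        exact Ideal.IsIntegral.comap_lt_comap (R := R) (I := a.asIdeal) (J := b.asIdeal) hab
      refine (Order.height_le_height_apply_of_strictMono _ hs ⟨Q, hQ⟩).trans (le_of_eq ?_)
      congr 1
      exact PrimeSpectrum.ext hQP
  · refine le_iInf fun Q => le_iInf fun hQ => le_iInf fun hPQ => ?_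
    rw [key]; refine WithBot.coe_le_coe.mpr ?_
    have h1 : (⟨P, hP⟩ : PrimeSpectrum R) ≤ PrimeSpectrum.comap (algebraMap R T) ⟨Q, hQ⟩ :=
      Ideal.map_le_iff_le_comap.mp hPQ
    refine (Order.height_mono h1).trans (Order.height_le fun l hl => ?_)
    have : Q.LiesOver l.last.asIdeal := ⟨by rw [hl]; rfl⟩
    obtain ⟨L, hL, hlast, -⟩ := Ideal.exists_ltSeries_of_hasGoingDown (S := T) l Q
    rw [← hL]
    exact Order.length_le_height hlast.le
end
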